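/- Expected replenishment cycle length of the static opaque selling policy (Theorem 5): Fix S ≥ 2, set T = N(S−1)+1 and c_s = 2√6·N(N−1)(N+1)/q + 4N. Consider the balls-into-bins process for horizon T under the static opaque policy, which sets ω(t) = 1 if and only if t ≥ T − c_s·√(T·log T), with flexed flex balls placed in the bin of their flex set with the smallest current load (ties broken in favor of the smallest index). Let R^s = min{t : max_i x_i(t) = S}. Then there exists a constant θ, depending only on N and q, such that N − 1 ≤ NS − E[R^s] ≤ θ for every S ≥ 2. -/

import Mathlib

/-!
The lower bound is `R ≤ T = N(S-1)+1`. For the upper bound, `T - R` counts the times `t < T` at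
which the maximum load is already `≥ S`, so `E[T - R]` is a sum of tail probabilities of the
maximum load, and a bound `N / T + 3 N r ^ (T - t)` with a fixed `r < 1` on the `t`-th term suffices
(`tail_maxLoad`).

The tails are controlled by the potential `Φ_α(t) = ∑ᵢ exp (α (xᵢ(t) - t/N))`. Write
`L = √(T log T)`.

* Without flexing, `E Φ_α(t+1) ≤ (1 + α²) E Φ_α(t)`; with `α = L / T` this shows that
  a centred load of `2L` has probability at most `N / T` (`tail_unflexed`). Before flexing starts,
  reaching load `S` requires a centred load of at least `4L`.
* With flexing, a ball sent to the lighter of two random bins `F` lowers the expected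
  `exp (α (x - t/N))` of its destination by the mean over `F` of half the spread on `F`; keeping
  only the pair (heaviest, lightest) gives a drift
  `-q (max - min) / (N (N-1))` (`mean_argmin_le`). The lightest bin has centred load `≤ 0` and the
  heaviest carries a `1/N` share of `Φ_α`, so for `α = q / (2 N² (N-1))` one gets
  `E Φ_α(t+1) ≤ (1 - α²) E Φ_α(t) + 2 N α²` (`mean_expPot_flexed`).
* If all centred loads are at most `2L` when flexing starts, then `Φ_α ≤ N exp (2 α L)` there, and
  since `α c_s ≥ 2` the `c_s L` flexing steps remove this excess: `T - t` steps before the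
  horizon `E Φ_α ≤ 3 N exp (α² (T - t))`. Markov's inequality at level `(T - t)/N` finishes.
-/

attribute [local instance] Classical.propDecidable

/-- An arrival type: (is-flex-ball, preferred bin, flex set). -/
abbrev Arrival (N : ℕ) := Bool × Fin N × Finset (Fin N)

/-- Mass of a single arrival: `f ~ Bernoulli(q)`, `p` uniform on `Fin N`,
`F` uniform on the 2-element subsets of `Fin N`, mutually independent. -/
noncomputable def arrivalProb (N : ℕ) (q : ℝ) (a : Arrival N) : ℝ :=
  (if a.1 then q else 1 - q) * (1 / (N : ℝ)) *
    (if a.2.2.card = 2 then 1 / (N.choose 2 : ℝ) else 0)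

/-- Mass of a sequence of `T` i.i.d. arrivals. -/
noncomputable def seqMass (N T : ℕ) (q : ℝ) (xs : Fin T → Arrival N) : ℝ :=
  ∏ t, arrivalProb N q (xs t)

/-- Expectation of a real random variable on the canonical space of `T` arrivals. -/
noncomputable def expec (N T : ℕ) (q : ℝ) (X : (Fin T → Arrival N) → ℝ) : ℝ :=
  ∑ xs : Fin T → Arrival N, seqMass N T q xs * X xs

/-- Probability of an event on the canonical space of `T` arrivals. -/
noncomputable def prob (N T : ℕ) (q : ℝ) (A : (Fin T → Arrival N) → Prop) : ℝ :=
  ∑ xs : Fin T → Arrival N, if A xs then seqMass N T q xs else 0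

/-- The least-loaded bin in `F` (ties broken in favor of the smallest index). -/
noncomputable def argminBin {N : ℕ} [NeZero N] (x : Fin N → ℕ) (F : Finset (Fin N)) : Fin N :=
  if hF : (F.filter fun i => ∀ j ∈ F, x i ≤ x j).Nonempty
  then (F.filter fun i => ∀ j ∈ F, x i ≤ x j).min' hF
  else 0

/-- One step of the greedy (least-loaded) allocation: if the ball is a flex ball and
flexing is exerted, it goes to the least-loaded bin of its flex set (lexicographic
tie-breaking); otherwise it goes to its preferred bin. -/
noncomputable def greedyStep {N : ℕ} [NeZero N] (flex : Bool) (a : Arrival N)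
    (x : Fin N → ℕ) : Fin N → ℕ :=
  fun i => if i = (if a.1 && flex then argminBin x a.2.2 else a.2.1) then x i + 1 else x i

/-- Load process under a flexing rule `dec` (which may depend on the whole realization,
the time, and the current loads), with greedy placement of flexed flex balls. -/
noncomputable def greedyLoads {N T : ℕ} [NeZero N]
    (dec : (Fin T → Arrival N) → ℕ → (Fin N → ℕ) → Bool)
    (xs : Fin T → Arrival N) : ℕ → Fin N → ℕ
  | 0 => fun _ => 0
  | t + 1 =>
    if h : t < T then
      greedyStep (dec xs t (greedyLoads dec xs t)) (xs ⟨t, h⟩) (greedyLoads dec xs t)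
    else greedyLoads dec xs t

/-- The maximum load over all bins. -/
noncomputable def maxLoad {N : ℕ} (x : Fin N → ℕ) : ℕ := Finset.univ.sup x

/-- `Gap(t)` : maximum load minus the average load `t/N`. -/
noncomputable def gap {N : ℕ} (x : Fin N → ℕ) (t : ℕ) : ℝ :=
  (maxLoad x : ℝ) - (t : ℝ) / (N : ℝ)

/-- Number of flexed balls `M = ∑_t f_t ω(t)`. -/
noncomputable def numFlexed {N T : ℕ} [NeZero N]
    (dec : (Fin T → Arrival N) → ℕ → (Fin N → ℕ) → Bool) (xs : Fin T → Arrival N) : ℕ :=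
  ∑ t : Fin T, if (xs t).1 && dec xs (t : ℕ) (greedyLoads dec xs (t : ℕ)) then 1 else 0

/-- Flexing rule of a "static"-type policy: flex exactly from period
`T - c·√(T log T)` on (ball `t` corresponds to step index `t-1`). -/
noncomputable def lateDec (N T : ℕ) (c : ℝ) :
    (Fin T → Arrival N) → ℕ → (Fin N → ℕ) → Bool :=
  fun _ s _ =>
    if (T : ℝ) - c * Real.sqrt ((T : ℝ) * Real.log (T : ℝ)) ≤ ((s : ℝ) + 1) then true else false

/-- Flexing rule of the dynamic policy: flex at period `t = s+1` iff the current gap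
`Gap(t-1)` is at least `a_d (T - t) q / N` with `a_d = 1/(5 C(N,2))`. -/
noncomputable def dynDec (N T : ℕ) (q : ℝ) :
    (Fin T → Arrival N) → ℕ → (Fin N → ℕ) → Bool :=
  fun _ s x =>
    if (1 / (5 * (N.choose 2 : ℝ))) * ((T : ℝ) - ((s : ℝ) + 1)) * q / (N : ℝ) ≤ gap x s
    then true else false

/-- First time (within horizon `T`) at which the maximum load equals `S`. -/
noncomputable def hitTime {N : ℕ} (T S : ℕ) (x : ℕ → Fin N → ℕ) : ℕ :=
  if h : ((Finset.range (T + 1)).filter fun t => maxLoad (x t) = S).Nonempty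
  then ((Finset.range (T + 1)).filter fun t => maxLoad (x t) = S).min' h
  else T

/-- The dynamic opaque policy: the flag records whether the trigger condition
`Gap(t) ≥ c_d (T-t) q / N` (with `c_d = 1/(10 C(N,2))`) has held at some time `≤ t`;
from then on every flex ball is flexed (greedy placement). Returns (flag, loads). -/
noncomputable def dynOpaque (N T : ℕ) [NeZero N] (q : ℝ) (xs : Fin T → Arrival N) :
    ℕ → Bool × (Fin N → ℕ)
  | 0 =>
    (if (1 / (10 * (N.choose 2 : ℝ))) * (T : ℝ) * q / (N : ℝ) ≤ 0 then true else false,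
      fun _ => 0)
  | t + 1 =>
    let p := dynOpaque N T q xs t
    let x' := if h : t < T then greedyStep p.1 (xs ⟨t, h⟩) p.2 else p.2
    (p.1 ||
      (if (1 / (10 * (N.choose 2 : ℝ))) * ((T : ℝ) - ((t : ℝ) + 1)) * q / (N : ℝ) ≤
          gap x' (t + 1)
       then true else false),
     x')

/-- Number of flexed balls `D = ∑_{t=1}^{R} f_t ω(t)` during one replenishment cycle,
for a policy given by the flexing rule `dec`. -/
noncomputable def cycleFlexCount (N T : ℕ) [NeZero N]
    (dec : (Fin T → Arrival N) → ℕ → (Fin N → ℕ) → Bool) (S : ℕ)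
    (xs : Fin T → Arrival N) : ℕ :=
  ∑ t ∈ Finset.range (hitTime T S (greedyLoads dec xs)),
    if h : t < T then (if (xs ⟨t, h⟩).1 && dec xs t (greedyLoads dec xs t) then 1 else 0)
    else 0

/-- Number of flexed balls during one replenishment cycle of the dynamic opaque policy. -/
noncomputable def dynFlexCount (N T : ℕ) [NeZero N] (q : ℝ) (S : ℕ)
    (xs : Fin T → Arrival N) : ℕ :=
  ∑ t ∈ Finset.range (hitTime T S fun u => (dynOpaque N T q xs u).2),
    if h : t < T then (if (xs ⟨t, h⟩).1 && (dynOpaque N T q xs t).1 then 1 else 0) else 0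

/-- The static-opaque flexing threshold constant `c_s = 2√6 N(N-1)(N+1)/q + 4N`. -/
noncomputable def csOpaque (N : ℕ) (q : ℝ) : ℝ :=
  2 * Real.sqrt 6 * (N : ℝ) * ((N : ℝ) - 1) * ((N : ℝ) + 1) / q + 4 * (N : ℝ)

/-- Expected replenishment cycle length `E[R^s]` of the static opaque policy at
stock level `S` (horizon `T = N(S-1)+1`). -/
noncomputable def staticOpaqueER (N : ℕ) [NeZero N] (q : ℝ) (S : ℕ) : ℝ :=
  expec N (N * (S - 1) + 1) q fun xs =>
    (hitTime (N * (S - 1) + 1) S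
      (greedyLoads (lateDec N (N * (S - 1) + 1) (csOpaque N q)) xs) : ℝ)

/-! ### The arrival distribution and expectations -/

/-- The uniform law on two-element subsets of `Fin N`. -/
noncomputable def pairWeight (N : ℕ) (F : Finset (Fin N)) : ℝ :=
  if F.card = 2 then 1 / (N.choose 2 : ℝ) else 0

/-- The bin receiving arrival `a` when the loads are `x`. -/
noncomputable def chosenBin {N : ℕ} [NeZero N] (flex : Bool) (a : Arrival N)
    (x : Fin N → ℕ) : Fin N :=
  if a.1 && flex then argminBin x a.2.2 else a.2.1

lemma choose_two_pos {N : ℕ} (hN : 2 ≤ N) : (0 : ℝ) < (N.choose 2 : ℝ) := by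
  exact_mod_cast Nat.choose_pos hN

lemma pairWeight_nonneg (N : ℕ) (F : Finset (Fin N)) : 0 ≤ pairWeight N F := by
  unfold pairWeight
  split_ifs <;> positivity

lemma sum_pairWeight {N : ℕ} (hN : 2 ≤ N) : ∑ F, pairWeight N F = 1 := by
  have h := choose_two_pos hN
  unfold pairWeight
  rw [← Finset.sum_filter, Finset.sum_const, nsmul_eq_mul]
  have : (Finset.univ.filter fun F : Finset (Fin N) => F.card = 2)
      = Finset.powersetCard 2 Finset.univ := by
    ext F; simp [Finset.mem_powersetCard]
  rw [this, Finset.card_powersetCard, Finset.card_univ, Fintype.card_fin]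
  field_simp

/-- Every bin belongs to exactly `N - 1` pairs. -/
lemma card_pairs_containing {N : ℕ} (j : Fin N) :
    (Finset.univ.filter fun F : Finset (Fin N) => F.card = 2 ∧ j ∈ F).card = N - 1 := by
  have : (Finset.univ.filter fun F : Finset (Fin N) => F.card = 2 ∧ j ∈ F)
      = (Finset.univ.erase j).image (fun k => ({j, k} : Finset (Fin N))) := by
    ext F
    simp only [Finset.mem_filter, Finset.mem_univ, true_and, Finset.mem_image,
      Finset.mem_erase, and_true]
    constructor
    · rintro ⟨hc, hj⟩
      obtain ⟨a, b, hab, rfl⟩ := Finset.card_eq_two.mp hc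
      simp only [Finset.mem_insert, Finset.mem_singleton] at hj
      rcases hj with rfl | rfl
      · exact ⟨b, hab.symm, rfl⟩
      · exact ⟨a, hab, Finset.pair_comm _ _⟩
    · rintro ⟨k, hk, rfl⟩
      exact ⟨Finset.card_pair hk.symm, by simp⟩
  rw [this, Finset.card_image_of_injOn, Finset.card_erase_of_mem (Finset.mem_univ _),
    Finset.card_univ, Fintype.card_fin]
  intro k hk l hl h
  have hk' : k ≠ j := (Finset.mem_erase.mp hk).1
  have : k ∈ ({j, l} : Finset (Fin N)) := by
    have h' : ({j, k} : Finset (Fin N)) = {j, l} := h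
    rw [← h']; simp
  simp only [Finset.mem_insert, Finset.mem_singleton] at this
  tauto

/-- The average over pairs of the mean over a pair is the overall mean. -/
lemma sum_pairWeight_mean {N : ℕ} (hN : 2 ≤ N) (h : Fin N → ℝ) :
    ∑ F, pairWeight N F * ((∑ j ∈ F, h j) / 2) = (∑ j, h j) / N := by
  have hc : (N.choose 2 : ℝ) = N * (N - 1) / 2 := Nat.cast_choose_two ℝ N
  have hN' : (2 : ℝ) ≤ N := by exact_mod_cast hN
  have h1 : ∀ F : Finset (Fin N), pairWeight N F * ((∑ j ∈ F, h j) / 2)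
      = ∑ j, (if F.card = 2 ∧ j ∈ F then 1 else 0) * (h j / (2 * (N.choose 2 : ℝ))) := by
    intro F
    unfold pairWeight
    by_cases hF : F.card = 2
    · simp only [hF, if_true, true_and, ite_mul, one_mul, zero_mul]
      rw [← Finset.sum_filter, Finset.filter_univ_mem, ← Finset.sum_div]
      rw [hc]
      have : (N : ℝ) - 1 ≠ 0 := by linarith
      field_simp
    · simp [hF]
  rw [Finset.sum_congr rfl fun F _ => h1 F, Finset.sum_comm, Finset.sum_div]
  refine Finset.sum_congr rfl fun j _ => ?_
  rw [← Finset.sum_mul, Finset.sum_boole, card_pairs_containing, Nat.cast_sub (by omega), hc]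
  have : (N : ℝ) - 1 ≠ 0 := by linarith
  push_cast
  field_simp

lemma arrivalProb_nonneg {N : ℕ} {q : ℝ} (hq0 : 0 < q) (hq1 : q ≤ 1) (a : Arrival N) :
    0 ≤ arrivalProb N q a := by
  unfold arrivalProb
  have : 0 ≤ 1 - q := by linarith
  refine mul_nonneg (mul_nonneg ?_ (by positivity)) ?_ <;> split_ifs <;> positivity

lemma sum_arrivalProb_mul (N : ℕ) (q : ℝ) (g : Arrival N → ℝ) :
    ∑ a, arrivalProb N q a * g a
      = ∑ p, ∑ F, 1 / (N : ℝ) * pairWeight N F * (q * g (true, p, F) + (1 - q) * g (false, p, F)) := by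
  rw [Fintype.sum_prod_type, Fintype.sum_bool, Fintype.sum_prod_type, Fintype.sum_prod_type,
    ← Finset.sum_add_distrib]
  refine Finset.sum_congr rfl fun p _ => ?_
  rw [← Finset.sum_add_distrib]
  refine Finset.sum_congr rfl fun F _ => ?_
  simp only [arrivalProb, pairWeight, if_true, Bool.false_eq_true, if_false]
  ring

lemma sum_const_div {N : ℕ} (hN : 2 ≤ N) (c : ℝ) : ∑ _p : Fin N, 1 / (N : ℝ) * c = c := by
  have : (N : ℝ) ≠ 0 := by positivity
  rw [Finset.sum_const, Finset.card_univ, Fintype.card_fin, nsmul_eq_mul]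
  field_simp

/-- The law of the chosen bin under an unflexed step is uniform. -/
lemma mean_chosen_unflexed {N : ℕ} [NeZero N] (hN : 2 ≤ N) (q : ℝ) (x : Fin N → ℕ)
    (h : Fin N → ℝ) :
    ∑ a, arrivalProb N q a * h (chosenBin false a x) = (∑ j, h j) / N := by
  rw [sum_arrivalProb_mul, Finset.sum_div]
  refine Finset.sum_congr rfl fun p _ => ?_
  simp only [chosenBin, Bool.and_false, Bool.false_eq_true, if_false]
  rw [← Finset.sum_mul, ← Finset.mul_sum, sum_pairWeight hN]
  ring

lemma mean_chosen_flexed {N : ℕ} [NeZero N] (hN : 2 ≤ N) (q : ℝ) (x : Fin N → ℕ)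
    (h : Fin N → ℝ) :
    ∑ a, arrivalProb N q a * h (chosenBin true a x)
      = q * ∑ F, pairWeight N F * h (argminBin x F) + (1 - q) * ((∑ j, h j) / N) := by
  rw [sum_arrivalProb_mul]
  simp only [chosenBin, Bool.and_true, Bool.false_eq_true, if_false, if_true]
  have : ∀ p : Fin N, ∑ F, 1 / (N : ℝ) * pairWeight N F *
      (q * h (argminBin x F) + (1 - q) * h p)
      = 1 / (N : ℝ) * (q * ∑ F, pairWeight N F * h (argminBin x F))
        + (1 - q) * (1 / (N : ℝ)) * h p := by
    intro p
    have h2 : (1 - q) * (1 / (N : ℝ)) * h p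
        = ∑ F, (1 - q) * (1 / (N : ℝ)) * h p * pairWeight N F := by
      rw [← Finset.mul_sum, sum_pairWeight hN, mul_one]
    rw [h2, Finset.mul_sum, Finset.mul_sum, ← Finset.sum_add_distrib]
    refine Finset.sum_congr rfl fun F _ => ?_
    ring
  rw [Finset.sum_congr rfl fun p _ => this p, Finset.sum_add_distrib, sum_const_div hN,
    ← Finset.mul_sum]
  ring

lemma sum_arrivalProb {N : ℕ} (hN : 2 ≤ N) (q : ℝ) : ∑ a, arrivalProb N q a = 1 := by
  have : NeZero N := ⟨by omega⟩
  have h := mean_chosen_unflexed hN q (fun _ => 0) (fun _ => 1)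
  have hN0 : (N : ℝ) ≠ 0 := by positivity
  simpa [hN0] using h

lemma seqMass_nonneg {N T : ℕ} {q : ℝ} (hq0 : 0 < q) (hq1 : q ≤ 1) (xs : Fin T → Arrival N) :
    0 ≤ seqMass N T q xs :=
  Finset.prod_nonneg fun _ _ => arrivalProb_nonneg hq0 hq1 _

lemma expec_const {N T : ℕ} (hN : 2 ≤ N) (q c : ℝ) : expec N T q (fun _ => c) = c := by
  unfold expec seqMass
  rw [← Finset.sum_mul]
  have := Finset.prod_univ_sum (fun _ : Fin T => (Finset.univ : Finset (Arrival N)))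
    (fun _ a => arrivalProb N q a)
  rw [Fintype.piFinset_univ] at this
  rw [← this]
  simp [sum_arrivalProb hN]

lemma expec_mono {N T : ℕ} {q : ℝ} (hq0 : 0 < q) (hq1 : q ≤ 1)
    {X Y : (Fin T → Arrival N) → ℝ} (h : ∀ xs, X xs ≤ Y xs) :
    expec N T q X ≤ expec N T q Y :=
  Finset.sum_le_sum fun xs _ => mul_le_mul_of_nonneg_left (h xs) (seqMass_nonneg hq0 hq1 xs)

lemma expec_add {N T : ℕ} {q : ℝ} (X Y : (Fin T → Arrival N) → ℝ) :
    expec N T q (fun xs => X xs + Y xs) = expec N T q X + expec N T q Y := by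
  simp [expec, mul_add, Finset.sum_add_distrib]

lemma expec_mul_left {N T : ℕ} {q : ℝ} (c : ℝ) (X : (Fin T → Arrival N) → ℝ) :
    expec N T q (fun xs => c * X xs) = c * expec N T q X := by
  unfold expec
  rw [Finset.mul_sum]
  exact Finset.sum_congr rfl fun _ _ => by ring

lemma expec_sum {N T : ℕ} {q : ℝ} {ι : Type*} (s : Finset ι)
    (X : ι → (Fin T → Arrival N) → ℝ) :
    expec N T q (fun xs => ∑ i ∈ s, X i xs) = ∑ i ∈ s, expec N T q (X i) := by
  unfold expec
  rw [Finset.sum_comm]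
  exact Finset.sum_congr rfl fun _ _ => by rw [Finset.mul_sum]

/-- Conditioning on all arrivals but the one at time `t`: if `f` does not read coordinate `t`
of its first argument, the arrival at `t` may be averaged out. -/
lemma expec_resample {N T : ℕ} (hN : 2 ≤ N) (q : ℝ) (t : Fin T)
    (f : (Fin T → Arrival N) → Arrival N → ℝ)
    (hf : ∀ xs b a, f (Function.update xs t b) a = f xs a) :
    expec N T q (fun xs => f xs (xs t))
      = expec N T q (fun xs => ∑ a, arrivalProb N q a * f xs a) := by
  let e := Equiv.funSplitAt t (Arrival N)
  have hmass : ∀ y, seqMass N T q (e.symm y)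
      = arrivalProb N q y.1 * ∏ j : {j // j ≠ t}, arrivalProb N q (y.2 j) := by
    intro y
    unfold seqMass
    rw [Fintype.prod_eq_mul_prod_subtype_ne _ t]
    congr 1
    · simp [e]
    · refine Finset.prod_congr rfl fun j _ => ?_
      simp [e, j.2]
  have hval : ∀ y, e.symm y t = y.1 := fun y => by simp [e]
  have hinv : ∀ a b z c, f (e.symm (a, z)) c = f (e.symm (b, z)) c := by
    intro a b z c
    rw [← hf (e.symm (b, z)) a c]
    congr 1
    ext1 j
    by_cases hj : j = t
    · subst hj; simp [e]
    · simp [e, hj]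
  unfold expec
  rw [← e.symm.sum_comp, ← e.symm.sum_comp, Fintype.sum_prod_type_right,
    Fintype.sum_prod_type_right]
  refine Finset.sum_congr rfl fun z _ => ?_
  simp only [hmass, hval]
  have a0 : Arrival N := (true, ⟨0, by omega⟩, ∅)
  have h1 : ∀ a, ∑ c, arrivalProb N q c * f (e.symm (a, z)) c
      = ∑ c, arrivalProb N q c * f (e.symm (a0, z)) c := fun a =>
    Finset.sum_congr rfl fun c _ => by rw [hinv a a0]
  simp only [h1]
  rw [← Finset.sum_mul, ← Finset.sum_mul, sum_arrivalProb hN, one_mul, Finset.mul_sum]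
  refine Finset.sum_congr rfl fun c _ => ?_
  rw [hinv c a0]
  ring

/-! ### Pathwise properties of the load process -/

lemma argminBin_spec {N : ℕ} [NeZero N] (x : Fin N → ℕ) {F : Finset (Fin N)}
    (hF : F.Nonempty) : argminBin x F ∈ F ∧ ∀ j ∈ F, x (argminBin x F) ≤ x j := by
  have hne : (F.filter fun i => ∀ j ∈ F, x i ≤ x j).Nonempty := by
    obtain ⟨i, hi, hmin⟩ := F.exists_min_image x hF
    exact ⟨i, Finset.mem_filter.mpr ⟨hi, hmin⟩⟩
  unfold argminBin
  rw [dif_pos hne]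
  exact Finset.mem_filter.mp (Finset.min'_mem _ hne)

lemma greedyStep_apply {N : ℕ} [NeZero N] (flex : Bool) (a : Arrival N) (x : Fin N → ℕ)
    (i : Fin N) :
    greedyStep flex a x i = x i + if i = chosenBin flex a x then 1 else 0 := by
  unfold greedyStep chosenBin
  split_ifs <;> rfl

/-- The loads at time `t` under the late-flexing rule. -/
noncomputable abbrev lateLoads (N T : ℕ) [NeZero N] (c : ℝ) (xs : Fin T → Arrival N) (t : ℕ) :
    Fin N → ℕ :=
  greedyLoads (lateDec N T c) xs t

/-- The number of initial steps during which the late-flexing rule does not flex. -/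
noncomputable def flexStart (T : ℕ) (c : ℝ) : ℕ :=
  ⌈(T : ℝ) - c * Real.sqrt ((T : ℝ) * Real.log (T : ℝ))⌉₊ - 1

lemma lateDec_eq (N T : ℕ) (c : ℝ) (xs : Fin T → Arrival N) (s : ℕ) (x : Fin N → ℕ) :
    lateDec N T c xs s x = decide (flexStart T c ≤ s) := by
  have : flexStart T c ≤ s ↔
      (T : ℝ) - c * Real.sqrt ((T : ℝ) * Real.log (T : ℝ)) ≤ ((s : ℝ) + 1) := by
    unfold flexStart
    rw [Nat.sub_le_iff_le_add, Nat.ceil_le]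
    push_cast
    rfl
  unfold lateDec
  by_cases h : flexStart T c ≤ s
  · rw [if_pos (this.mp h)]; simp [h]
  · rw [if_neg (fun h' => h (this.mpr h'))]; simp [h]

lemma flexStart_lt {T : ℕ} {c : ℝ} {t : ℕ} (ht : t < flexStart T c) :
    (t : ℝ) + 1 < (T : ℝ) - c * Real.sqrt ((T : ℝ) * Real.log (T : ℝ)) := by
  unfold flexStart at ht
  have h : t + 1 < ⌈(T : ℝ) - c * Real.sqrt ((T : ℝ) * Real.log (T : ℝ))⌉₊ := by omega
  rw [Nat.lt_ceil] at h
  exact_mod_cast h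

lemma lateLoads_succ {N T : ℕ} [NeZero N] (c : ℝ) (xs : Fin T → Arrival N) {t : ℕ} (ht : t < T) :
    lateLoads N T c xs (t + 1)
      = greedyStep (decide (flexStart T c ≤ t)) (xs ⟨t, ht⟩) (lateLoads N T c xs t) := by
  unfold lateLoads
  rw [greedyLoads, dif_pos ht, lateDec_eq]

/-- The loads at time `t` do not depend on arrivals with index `≥ t`. -/
lemma lateLoads_update {N T : ℕ} [NeZero N] (c : ℝ) (xs : Fin T → Arrival N) (s : Fin T)
    (b : Arrival N) {t : ℕ} (ht : t ≤ s) :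
    lateLoads N T c (Function.update xs s b) t = lateLoads N T c xs t := by
  induction t with
  | zero => rfl
  | succ t ih =>
    have hlt : t < T := by omega
    rw [lateLoads_succ c _ hlt, lateLoads_succ c _ hlt, ih (by omega)]
    rw [Function.update_of_ne]
    intro h
    have := congrArg Fin.val h
    simp at this
    omega

lemma sum_lateLoads {N T : ℕ} [NeZero N] (c : ℝ) (xs : Fin T → Arrival N) {t : ℕ} (ht : t ≤ T) :
    ∑ i, lateLoads N T c xs t i = t := by
  induction t with
  | zero => simp [lateLoads, greedyLoads]
  | succ t ih =>
    rw [lateLoads_succ c xs (by omega)]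
    simp only [greedyStep_apply, Finset.sum_add_distrib, ih (by omega)]
    simp

lemma maxLoad_lateLoads_mono {N T : ℕ} [NeZero N] (c : ℝ) (xs : Fin T → Arrival N) :
    Monotone fun t => maxLoad (lateLoads N T c xs t) := by
  refine monotone_nat_of_le_succ fun t => ?_
  refine Finset.sup_mono_fun fun i _ => ?_
  by_cases ht : t < T
  · rw [lateLoads_succ c xs ht, greedyStep_apply]
    omega
  · unfold lateLoads
    conv_rhs => rw [greedyLoads]
    rw [dif_neg ht]

lemma hitTime_le {N : ℕ} (T S : ℕ) (x : ℕ → Fin N → ℕ) : hitTime T S x ≤ T := by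
  unfold hitTime
  split_ifs with h
  · have := Finset.min'_mem _ h
    simp only [Finset.mem_filter, Finset.mem_range] at this
    omega
  · exact le_rfl

/-- `T - R` is at most the number of times before `T` at which the maximum load is at least `S`. -/
lemma sub_hitTime_le {N : ℕ} (T S : ℕ) (x : ℕ → Fin N → ℕ)
    (hx : Monotone fun t => maxLoad (x t)) :
    (T : ℝ) - hitTime T S x ≤ ∑ t ∈ Finset.range T, if S ≤ maxLoad (x t) then (1 : ℝ) else 0 := by
  have hle := hitTime_le T S x
  rw [Finset.sum_boole, ← Nat.cast_sub hle, ← Nat.card_Ico]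
  refine Nat.cast_le.mpr (Finset.card_le_card fun t ht => ?_)
  rw [Finset.mem_Ico] at ht
  refine Finset.mem_filter.mpr ⟨Finset.mem_range.mpr ht.2, ?_⟩
  by_cases h : ((Finset.range (T + 1)).filter fun t => maxLoad (x t) = S).Nonempty
  · have heq : hitTime T S x = Finset.min' _ h := by unfold hitTime; rw [dif_pos h]
    have hmem := Finset.min'_mem _ h
    rw [← heq] at hmem
    rw [← (Finset.mem_filter.mp hmem).2]
    exact hx ht.1
  · have heq : hitTime T S x = T := by unfold hitTime; rw [dif_neg h]
    omega

/-! ### The exponential potential -/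

/-- The exponential potential `∑ᵢ exp (α (xᵢ - t/N))` of the loads centred at their mean. -/
noncomputable def expPot {N : ℕ} (α : ℝ) (x : Fin N → ℕ) (t : ℕ) : ℝ :=
  ∑ i, Real.exp (α * ((x i : ℝ) - (t : ℝ) / (N : ℝ)))

lemma expPot_nonneg {N : ℕ} (α : ℝ) (x : Fin N → ℕ) (t : ℕ) : 0 ≤ expPot α x t :=
  Finset.sum_nonneg fun _ _ => (Real.exp_pos _).le

/-- A single high bin forces the potential to be large. -/
lemma exp_le_expPot {N : ℕ} {α : ℝ} (hα : 0 ≤ α) (x : Fin N → ℕ) (t : ℕ) {y : ℝ} (i : Fin N)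
    (hi : y ≤ (x i : ℝ) - (t : ℝ) / (N : ℝ)) : Real.exp (α * y) ≤ expPot α x t :=
  (Real.exp_le_exp.mpr (mul_le_mul_of_nonneg_left hi hα)).trans
    (Finset.single_le_sum (f := fun i => Real.exp (α * ((x i : ℝ) - (t : ℝ) / (N : ℝ))))
      (fun _ _ => (Real.exp_pos _).le) (Finset.mem_univ i))

/-- Pathwise second-order expansion of the potential along one step, from `eˣ ≤ 1 + x + x²`
on `[-1, 1]`. -/
lemma expPot_step_le {N : ℕ} [NeZero N] (hN : 2 ≤ N) {α : ℝ} (h0 : 0 ≤ α) (h1 : α ≤ 1)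
    (flex : Bool) (a : Arrival N) (x : Fin N → ℕ) (t : ℕ) :
    expPot α (greedyStep flex a x) (t + 1)
      ≤ (1 + α ^ 2 - α / N) * expPot α x t
        + α * Real.exp (α * ((x (chosenBin flex a x) : ℝ) - (t : ℝ) / (N : ℝ))) := by
  have hN' : (2 : ℝ) ≤ N := by exact_mod_cast hN
  have hinv : 0 ≤ 1 / (N : ℝ) ∧ 1 / (N : ℝ) ≤ 1 := by
    constructor
    · positivity
    · rw [div_le_one (by linarith)]; linarith
  have hz : ∀ z : ℝ, |z| ≤ 1 → Real.exp (α * z) ≤ 1 + α * z + α ^ 2 := by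
    intro z hz
    have hb : |α * z| ≤ 1 := by
      rw [abs_mul, abs_of_nonneg h0]
      exact mul_le_one₀ h1 (abs_nonneg z) hz
    have h := (abs_le.mp (Real.abs_exp_sub_one_sub_id_le hb)).2
    have hz2 : z ^ 2 ≤ 1 := by rw [← sq_abs]; exact pow_le_one₀ (abs_nonneg z) hz
    nlinarith [sq_nonneg α]
  have key : ∀ i, Real.exp (α * (((greedyStep flex a x i : ℕ) : ℝ) - ((t + 1 : ℕ) : ℝ) / (N : ℝ)))
      ≤ (1 + α ^ 2 - α / N) * Real.exp (α * ((x i : ℝ) - (t : ℝ) / (N : ℝ)))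
        + if i = chosenBin flex a x then
            α * Real.exp (α * ((x i : ℝ) - (t : ℝ) / (N : ℝ))) else 0 := by
    intro i
    set E := Real.exp (α * ((x i : ℝ) - (t : ℝ) / (N : ℝ))) with hE
    have hEp : 0 < E := Real.exp_pos _
    rw [greedyStep_apply]
    split_ifs with hi
    · have : α * (((x i + 1 : ℕ) : ℝ) - ((t + 1 : ℕ) : ℝ) / (N : ℝ))
          = α * ((x i : ℝ) - (t : ℝ) / (N : ℝ)) + α * (1 - 1 / (N : ℝ)) := by
        push_cast; ring
      rw [this, Real.exp_add, ← hE]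
      have := mul_le_mul_of_nonneg_left
        (hz (1 - 1 / (N : ℝ)) (by rw [abs_le]; constructor <;> linarith)) hEp.le
      refine this.trans (le_of_eq ?_)
      ring
    · have : α * (((x i + 0 : ℕ) : ℝ) - ((t + 1 : ℕ) : ℝ) / (N : ℝ))
          = α * ((x i : ℝ) - (t : ℝ) / (N : ℝ)) + α * (- (1 / (N : ℝ))) := by
        push_cast; ring
      rw [this, Real.exp_add, ← hE]
      have := mul_le_mul_of_nonneg_left
        (hz (- (1 / (N : ℝ))) (by rw [abs_le]; constructor <;> linarith)) hEp.le
      refine this.trans (le_of_eq ?_)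
      ring
  unfold expPot
  refine (Finset.sum_le_sum fun i _ => key i).trans (le_of_eq ?_)
  rw [Finset.sum_add_distrib, ← Finset.mul_sum]
  simp

/-- Averaged one-step growth of the potential without flexing. -/
lemma mean_expPot_unflexed {N : ℕ} [NeZero N] (hN : 2 ≤ N) {q : ℝ} (hq0 : 0 < q) (hq1 : q ≤ 1)
    {α : ℝ} (h0 : 0 ≤ α) (h1 : α ≤ 1) (x : Fin N → ℕ) (t : ℕ) :
    ∑ a, arrivalProb N q a * expPot α (greedyStep false a x) (t + 1)
      ≤ (1 + α ^ 2) * expPot α x t := by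
  have hN0 : (N : ℝ) ≠ 0 := by positivity
  refine (Finset.sum_le_sum fun a _ => mul_le_mul_of_nonneg_left
    (expPot_step_le hN h0 h1 false a x t) (arrivalProb_nonneg hq0 hq1 a)).trans (le_of_eq ?_)
  simp only [mul_add]
  rw [Finset.sum_add_distrib, ← Finset.sum_mul, sum_arrivalProb hN]
  simp only [mul_left_comm _ α]
  rw [← Finset.mul_sum, mean_chosen_unflexed hN q x
    (fun i => Real.exp (α * ((x i : ℝ) - (t : ℝ) / (N : ℝ))))]
  unfold expPot
  ring

/-- Flexing drift: sending a ball to the lighter of two random bins beats the uniform choice by the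
contribution of the pair formed by any two bins `u`, `v`. -/
lemma mean_argmin_le {N : ℕ} [NeZero N] (hN : 2 ≤ N) (x : Fin N → ℕ) (h : Fin N → ℝ)
    (hmono : ∀ i j, x i ≤ x j → h i ≤ h j) (u v : Fin N) :
    ∑ F, pairWeight N F * h (argminBin x F)
      ≤ (∑ j, h j) / N - (h u - h v) / ((N : ℝ) * ((N : ℝ) - 1)) := by
  have hc : (N.choose 2 : ℝ) = N * (N - 1) / 2 := Nat.cast_choose_two ℝ N
  have hN' : (2 : ℝ) ≤ N := by exact_mod_cast hN
  have hN1 : (N : ℝ) - 1 ≠ 0 := by linarith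
  have hpair : ∀ F : Finset (Fin N), F.card = 2 →
      h (argminBin x F) ≤ (∑ j ∈ F, h j) / 2 := by
    intro F hF
    obtain ⟨-, hmin⟩ := argminBin_spec x (F := F) (Finset.card_pos.mp (by omega))
    have := Finset.card_nsmul_le_sum F h _ fun j hj => hmono _ _ (hmin j hj)
    rw [hF, nsmul_eq_mul] at this
    push_cast at this
    linarith
  rw [← sum_pairWeight_mean hN h]
  have hnn : ∀ F : Finset (Fin N),
      0 ≤ pairWeight N F * ((∑ j ∈ F, h j) / 2) - pairWeight N F * h (argminBin x F) := by
    intro F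
    rw [← mul_sub]
    by_cases hF : F.card = 2
    · exact mul_nonneg (pairWeight_nonneg N F) (by linarith [hpair F hF])
    · simp [pairWeight, hF]
  suffices hs : (h u - h v) / ((N : ℝ) * ((N : ℝ) - 1))
      ≤ ∑ F, (pairWeight N F * ((∑ j ∈ F, h j) / 2) - pairWeight N F * h (argminBin x F)) by
    rw [Finset.sum_sub_distrib] at hs
    linarith
  by_cases huv : u = v
  · subst huv
    simpa using Finset.sum_nonneg fun F _ => hnn F
  · refine le_trans ?_ (Finset.single_le_sum (fun F _ => hnn F)
      (Finset.mem_univ ({u, v} : Finset (Fin N))))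
    obtain ⟨-, hmin⟩ := argminBin_spec x (F := {u, v}) (by simp)
    have hv := hmono _ _ (hmin v (by simp))
    rw [pairWeight, if_pos (Finset.card_pair huv), Finset.sum_pair huv, hc, ← mul_sub]
    have : (h u - h v) / ((N : ℝ) * ((N : ℝ) - 1))
        = 1 / ((N : ℝ) * ((N : ℝ) - 1) / 2) * ((h u - h v) / 2) := by
      field_simp
    rw [this]
    refine mul_le_mul_of_nonneg_left (by linarith) ?_
    have : 0 < (N : ℝ) - 1 := by linarith
    positivity

/-- The exponent used in the flexing phase. -/
noncomputable def flexExponent (N : ℕ) (q : ℝ) : ℝ := q / (2 * (N : ℝ) ^ 2 * ((N : ℝ) - 1))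

/-- Averaged one-step contraction of the potential under flexing. Some bin has centred load `≤ 0`,
and the heaviest bin carries at least a `1/N` fraction of the potential. -/
lemma mean_expPot_flexed {N : ℕ} [NeZero N] (hN : 2 ≤ N) {q : ℝ} (hq0 : 0 < q) (hq1 : q ≤ 1)
    {α : ℝ} (hα : α = flexExponent N q) (h0 : 0 ≤ α) (h1 : α ≤ 1) (x : Fin N → ℕ) (t : ℕ)
    (hx : ∑ i, x i = t) :
    ∑ a, arrivalProb N q a * expPot α (greedyStep true a x) (t + 1)
      ≤ (1 - α ^ 2) * expPot α x t + 2 * N * α ^ 2 := by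
  have hN' : (2 : ℝ) ≤ N := by exact_mod_cast hN
  have hN1 : (0 : ℝ) < (N : ℝ) - 1 := by linarith
  have hN0 : (N : ℝ) ≠ 0 := by positivity
  set h : Fin N → ℝ := fun i => Real.exp (α * ((x i : ℝ) - (t : ℝ) / (N : ℝ))) with hh
  have hsum : expPot α x t = ∑ i, h i := rfl
  have hmono : ∀ i j, x i ≤ x j → h i ≤ h j := by
    intro i j hij
    have : (x i : ℝ) ≤ x j := by exact_mod_cast hij
    exact Real.exp_le_exp.mpr (mul_le_mul_of_nonneg_left (by linarith) h0)
  obtain ⟨u, -, hu⟩ := Finset.exists_max_image Finset.univ x Finset.univ_nonempty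
  obtain ⟨v, -, hv⟩ := Finset.exists_min_image Finset.univ x Finset.univ_nonempty
  have hvle : h v ≤ 1 := by
    have h2 := Finset.card_nsmul_le_sum Finset.univ x _ hv
    rw [hx, Finset.card_univ, Fintype.card_fin, smul_eq_mul] at h2
    have h3 : (N : ℝ) * x v ≤ t := by exact_mod_cast h2
    have h4 : (x v : ℝ) ≤ t / N := by
      rw [le_div_iff₀ (by linarith)]; linarith
    rw [hh]
    exact Real.exp_le_one_iff.mpr (mul_nonpos_of_nonneg_of_nonpos h0 (by linarith))
  have hule : expPot α x t ≤ N * h u := by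
    have h2 := Finset.sum_le_card_nsmul Finset.univ h _ fun j hj => hmono _ _ (hu j hj)
    rwa [Finset.card_univ, Fintype.card_fin, nsmul_eq_mul] at h2
  refine (Finset.sum_le_sum fun a _ => mul_le_mul_of_nonneg_left
    (expPot_step_le hN h0 h1 true a x t) (arrivalProb_nonneg hq0 hq1 a)).trans ?_
  simp only [mul_add]
  rw [Finset.sum_add_distrib, ← Finset.sum_mul, sum_arrivalProb hN]
  simp only [mul_left_comm _ α]
  rw [← Finset.mul_sum, mean_chosen_flexed hN q x h, ← hsum]
  have hdrift := mean_argmin_le hN x h hmono u v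
  rw [← hsum] at hdrift
  have hqα : q * (1 / ((N : ℝ) * ((N : ℝ) - 1))) = 2 * N * α := by
    rw [hα, flexExponent]; field_simp
  have hd2 : q * ∑ F, pairWeight N F * h (argminBin x F)
      ≤ q * (expPot α x t / N) - 2 * N * α * (h u - h v) := by
    refine (mul_le_mul_of_nonneg_left hdrift hq0.le).trans (le_of_eq ?_)
    rw [← hqα]; ring
  have hd3 : 2 * α * (expPot α x t - N) ≤ 2 * N * α * (h u - h v) := by
    have : expPot α x t - N ≤ N * (h u - h v) := by nlinarith
    nlinarith
  have := mul_le_mul_of_nonneg_left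
    (add_le_add_left (hd2.trans (sub_le_sub_left hd3 _)) ((1 - q) * (expPot α x t / N))) h0
  refine (add_le_add_right this _).trans (le_of_eq ?_)
  field_simp
  ring

/-! ### Evolution of the expected potential -/

/-- Markov property: the arrival at time `t` is averaged out against a weight `W` that does not
depend on it. -/
lemma expec_expPot_succ {N T : ℕ} [NeZero N] (hN : 2 ≤ N) (q c α : ℝ) {t : ℕ} (ht : t < T)
    (W : (Fin T → Arrival N) → ℝ) (hW : ∀ xs b, W (Function.update xs ⟨t, ht⟩ b) = W xs) :
    expec N T q (fun xs => W xs * expPot α (lateLoads N T c xs (t + 1)) (t + 1))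
      = expec N T q (fun xs => W xs * ∑ a, arrivalProb N q a *
          expPot α (greedyStep (decide (flexStart T c ≤ t)) a (lateLoads N T c xs t)) (t + 1)) := by
  have h := expec_resample hN q ⟨t, ht⟩ (fun xs a => W xs *
    expPot α (greedyStep (decide (flexStart T c ≤ t)) a (lateLoads N T c xs t)) (t + 1))
    (fun xs b a => by rw [hW, lateLoads_update c xs ⟨t, ht⟩ b (le_refl t)])
  simp only [lateLoads_succ c _ ht]
  rw [h]
  congr 1
  ext xs
  rw [Finset.mul_sum]
  exact Finset.sum_congr rfl fun a _ => by ring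

lemma expPot_zero {N T : ℕ} [NeZero N] (c α : ℝ) (xs : Fin T → Arrival N) :
    expPot α (lateLoads N T c xs 0) 0 = N := by
  simp [expPot, lateLoads, greedyLoads]

lemma expec_expPot_unflexed {N T : ℕ} [NeZero N] (hN : 2 ≤ N) {q : ℝ} (hq0 : 0 < q)
    (hq1 : q ≤ 1) (c : ℝ) {α : ℝ} (h0 : 0 ≤ α) (h1 : α ≤ 1) {t : ℕ} (htT : t ≤ T)
    (ht : t ≤ flexStart T c) :
    expec N T q (fun xs => expPot α (lateLoads N T c xs t) t) ≤ N * Real.exp (α ^ 2 * t) := by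
  induction t with
  | zero =>
    simp only [expPot_zero]
    rw [expec_const hN]
    simp
  | succ t ih =>
    have hs := expec_expPot_succ (T := T) hN q c α (t := t) (by omega) (fun _ => 1) (fun _ _ => rfl)
    simp only [one_mul] at hs
    rw [hs]
    have hflag : decide (flexStart T c ≤ t) = false := by simp; omega
    simp only [hflag]
    refine (expec_mono hq0 hq1 fun xs =>
      mean_expPot_unflexed hN hq0 hq1 h0 h1 (lateLoads N T c xs t) t).trans ?_
    rw [expec_mul_left]
    have e1 : (1 + α ^ 2) ≤ Real.exp (α ^ 2) := by linarith [Real.add_one_le_exp (α ^ 2)]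
    have e2 : (N : ℝ) * Real.exp (α ^ 2 * ((t + 1 : ℕ) : ℝ))
        = Real.exp (α ^ 2) * (N * Real.exp (α ^ 2 * t)) := by
      push_cast
      rw [mul_add, Real.exp_add, mul_one]; ring
    rw [e2]
    refine (mul_le_mul_of_nonneg_left (ih (by omega) (by omega)) (by positivity)).trans ?_
    exact mul_le_mul_of_nonneg_right e1 (by positivity)

/-- In the flexing phase the weighted expected potential contracts geometrically towards a
constant, for every weight in `[0, 1]` determined by the loads at the start of the phase. -/
lemma expec_expPot_flexed {N T : ℕ} [NeZero N] (hN : 2 ≤ N) {q : ℝ} (hq0 : 0 < q)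
    (hq1 : q ≤ 1) (c : ℝ) {α : ℝ} (hα : α = flexExponent N q) (h0 : 0 ≤ α) (h1 : α ≤ 1)
    (w : (Fin N → ℕ) → ℝ) (w0 : ∀ x, 0 ≤ w x) (w1 : ∀ x, w x ≤ 1) (k : ℕ)
    (hk : flexStart T c + k ≤ T) :
    expec N T q (fun xs => w (lateLoads N T c xs (flexStart T c)) *
        expPot α (lateLoads N T c xs (flexStart T c + k)) (flexStart T c + k))
      ≤ (1 - α ^ 2) ^ k * expec N T q (fun xs => w (lateLoads N T c xs (flexStart T c)) *
        expPot α (lateLoads N T c xs (flexStart T c)) (flexStart T c)) + 2 * N := by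
  have hα2 : α ^ 2 ≤ 1 := pow_le_one₀ h0 h1
  induction k with
  | zero => simp
  | succ k ih =>
    set T₀ := flexStart T c with hT₀
    have hs := expec_expPot_succ hN q c α (t := T₀ + k) (by omega)
      (fun xs => w (lateLoads N T c xs T₀))
      (fun xs b => by rw [lateLoads_update c xs ⟨T₀ + k, by omega⟩ b (Nat.le_add_right T₀ k)])
    rw [← add_assoc, hs]
    have hflag : decide (flexStart T c ≤ T₀ + k) = true := by simp [hT₀]
    simp only [hflag]
    have hb : ∀ xs : Fin T → Arrival N, w (lateLoads N T c xs T₀) * ∑ a, arrivalProb N q a *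
          expPot α (greedyStep true a (lateLoads N T c xs (T₀ + k))) (T₀ + k + 1)
        ≤ (1 - α ^ 2) * (w (lateLoads N T c xs T₀) *
            expPot α (lateLoads N T c xs (T₀ + k)) (T₀ + k)) + 2 * N * α ^ 2 := by
      intro xs
      have hm := mul_le_mul_of_nonneg_left
        (mean_expPot_flexed hN hq0 hq1 hα h0 h1 (lateLoads N T c xs (T₀ + k)) (T₀ + k)
          (sum_lateLoads c xs (by omega))) (w0 (lateLoads N T c xs T₀))
      have hw := mul_le_mul_of_nonneg_right (w1 (lateLoads N T c xs T₀))
        (show (0 : ℝ) ≤ 2 * N * α ^ 2 by positivity)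
      rw [mul_add] at hm
      linarith
    refine (expec_mono hq0 hq1 hb).trans ?_
    rw [expec_add, expec_mul_left, expec_const hN]
    have := mul_le_mul_of_nonneg_left (ih (by omega)) (show 0 ≤ 1 - α ^ 2 by linarith)
    refine (add_le_add_left this _).trans (le_of_eq ?_)
    rw [pow_succ]
    ring

/-! ### Tail bounds for the maximum load -/

/-- The deviation scale `√(T log T)`. -/
noncomputable def devScale (T : ℕ) : ℝ := Real.sqrt ((T : ℝ) * Real.log (T : ℝ))

/-- Before flexing starts, a centred load of `2 √(T log T)` has probability at most `N / T`:
Markov's inequality with exponent `√(T log T) / T`. -/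
lemma tail_unflexed {N T : ℕ} [NeZero N] (hN : 2 ≤ N) (hT : 2 ≤ T) {q : ℝ} (hq0 : 0 < q)
    (hq1 : q ≤ 1) (c : ℝ) {t : ℕ} (htT : t ≤ T) (ht : t ≤ flexStart T c) :
    expec N T q (fun xs => if ∃ i, 2 * devScale T ≤ (lateLoads N T c xs t i : ℝ) - (t : ℝ) / N
      then 1 else 0) ≤ (N : ℝ) / T := by
  have hTr : (2 : ℝ) ≤ T := by exact_mod_cast hT
  have hTp : (0 : ℝ) < T := by linarith
  have hlog : 0 ≤ Real.log T := Real.log_nonneg (by linarith)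
  set L := devScale T with hL
  have hL0 : 0 ≤ L := Real.sqrt_nonneg _
  have hL2 : L ^ 2 = T * Real.log T := Real.sq_sqrt (by positivity)
  have hLT : L ≤ T := by
    refine abs_le_of_sq_le_sq' ?_ hTp.le |>.2
    rw [hL2]
    nlinarith [Real.log_le_sub_one_of_pos hTp]
  set l := L / T with hl
  have hl0 : 0 ≤ l := by positivity
  have hl1 : l ≤ 1 := by rw [hl, div_le_one hTp]; exact hLT
  have hpt : ∀ xs : Fin T → Arrival N,
      (if ∃ i, 2 * L ≤ (lateLoads N T c xs t i : ℝ) - (t : ℝ) / N then (1 : ℝ) else 0)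
        ≤ Real.exp (-(l * (2 * L))) * expPot l (lateLoads N T c xs t) t := by
    intro xs
    split_ifs with h
    · obtain ⟨i, hi⟩ := h
      have := mul_le_mul_of_nonneg_left (exp_le_expPot hl0 (lateLoads N T c xs t) t i hi)
        (Real.exp_pos (-(l * (2 * L)))).le
      rwa [← Real.exp_add, neg_add_cancel, Real.exp_zero] at this
    · exact mul_nonneg (Real.exp_pos _).le (expPot_nonneg _ _ _)
  refine (expec_mono hq0 hq1 hpt).trans ?_
  rw [expec_mul_left]
  refine (mul_le_mul_of_nonneg_left (expec_expPot_unflexed hN hq0 hq1 c hl0 hl1 htT ht)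
    (Real.exp_pos _).le).trans ?_
  have hlL : l * (2 * L) = 2 * Real.log T := by
    rw [hl, div_mul_eq_mul_div, div_eq_iff hTp.ne']; nlinarith
  have hl2 : l ^ 2 * t ≤ Real.log T := by
    have h1 : l ^ 2 * T = Real.log T := by
      rw [hl, div_pow, hL2]; field_simp
    have h2 : (t : ℝ) ≤ T := by exact_mod_cast htT
    nlinarith [sq_nonneg l]
  rw [hlL, mul_left_comm, ← Real.exp_add]
  have : Real.exp (-(2 * Real.log T) + l ^ 2 * t) ≤ 1 / T := by
    rw [one_div, ← Real.exp_log (inv_pos.mpr hTp), Real.log_inv]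
    exact Real.exp_le_exp.mpr (by linarith)
  calc (N : ℝ) * Real.exp (-(2 * Real.log T) + l ^ 2 * t) ≤ N * (1 / T) :=
        mul_le_mul_of_nonneg_left this (by positivity)
    _ = N / T := by ring

lemma flexExponent_pos {N : ℕ} (hN : 2 ≤ N) {q : ℝ} (hq0 : 0 < q) : 0 < flexExponent N q := by
  have hN' : (2 : ℝ) ≤ N := by exact_mod_cast hN
  have : 0 < (N : ℝ) - 1 := by linarith
  unfold flexExponent
  positivity

lemma flexExponent_le {N : ℕ} (hN : 2 ≤ N) {q : ℝ} (hq1 : q ≤ 1) :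
    flexExponent N q ≤ 1 / (2 * (N : ℝ)) := by
  have hN' : (2 : ℝ) ≤ N := by exact_mod_cast hN
  have : 0 < (N : ℝ) - 1 := by linarith
  unfold flexExponent
  rw [div_le_div_iff₀ (by positivity) (by positivity)]
  have h1 : (1 : ℝ) ≤ N * (N - 1) := by nlinarith
  have : 2 * (N : ℝ) ≤ 2 * N ^ 2 * (N - 1) := by nlinarith
  nlinarith

lemma csOpaque_ge {N : ℕ} (hN : 2 ≤ N) {q : ℝ} (hq0 : 0 < q) : 4 * (N : ℝ) ≤ csOpaque N q := by
  have hN' : (2 : ℝ) ≤ N := by exact_mod_cast hN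
  have : 0 < (N : ℝ) - 1 := by linarith
  unfold csOpaque
  have : 0 ≤ 2 * Real.sqrt 6 * (N : ℝ) * ((N : ℝ) - 1) * ((N : ℝ) + 1) / q := by positivity
  linarith

/-- The window length constant is large enough for the contraction at rate `α²` to absorb an
initial deviation of `2 √(T log T)`. -/
lemma two_le_flexExponent_mul_cs {N : ℕ} (hN : 2 ≤ N) {q : ℝ} (hq0 : 0 < q) :
    2 ≤ flexExponent N q * csOpaque N q := by
  have hN' : (2 : ℝ) ≤ N := by exact_mod_cast hN
  have hN1 : 0 < (N : ℝ) - 1 := by linarith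
  have hpos := flexExponent_pos hN hq0
  have h6 : 2 ≤ Real.sqrt 6 := Real.le_sqrt_of_sq_le (by norm_num)
  have h1 : flexExponent N q * csOpaque N q
      = Real.sqrt 6 * (((N : ℝ) + 1) / N) + flexExponent N q * (4 * N) := by
    unfold csOpaque
    rw [mul_add]
    congr 1
    unfold flexExponent
    field_simp
  have h2 : (1 : ℝ) ≤ ((N : ℝ) + 1) / N := by rw [le_div_iff₀ (by linarith)]; linarith
  have h3 : 0 ≤ flexExponent N q * (4 * N) := by positivity
  rw [h1]
  nlinarith

/-- The geometric ratio governing the tail of the maximum load near the horizon. -/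
noncomputable def tailRatio (N : ℕ) (q : ℝ) : ℝ := Real.exp (-(flexExponent N q / (2 * N)))

/-- Bound on the probability that load `S` is reached by time `t < T`; `T` and `S` are related only by
`T/N ≤ S`, so that load `S` at time `t` means a centred load of at least `(T - t)/N`. -/
lemma tail_maxLoad {N T S : ℕ} [NeZero N] (hN : 2 ≤ N) (hT : 2 ≤ T) {q : ℝ} (hq0 : 0 < q)
    (hq1 : q ≤ 1) (hS : (T : ℝ) / N ≤ S) {t : ℕ} (ht : t < T) :
    expec N T q (fun xs => if S ≤ maxLoad (lateLoads N T (csOpaque N q) xs t) then 1 else 0)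
      ≤ (N : ℝ) / T + 3 * N * tailRatio N q ^ (T - t) := by
  have hN' : (2 : ℝ) ≤ N := by exact_mod_cast hN
  have hNp : (0 : ℝ) < N := by linarith
  set c := csOpaque N q with hc
  have hc4 : 4 * (N : ℝ) ≤ c := csOpaque_ge hN hq0
  set L := devScale T with hL
  have hL0 : 0 ≤ L := Real.sqrt_nonneg _
  have hr0 : 0 ≤ tailRatio N q := (Real.exp_pos _).le
  have htr : (t : ℝ) ≤ T := by exact_mod_cast ht.le
  have hmax : ∀ xs : Fin T → Arrival N, S ≤ maxLoad (lateLoads N T c xs t) →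
      ∃ i, ((T : ℝ) - t) / N ≤ (lateLoads N T c xs t i : ℝ) - (t : ℝ) / N := by
    intro xs h
    obtain ⟨i, -, hi⟩ := Finset.exists_mem_eq_sup Finset.univ Finset.univ_nonempty
      (lateLoads N T c xs t)
    unfold maxLoad at h
    rw [hi] at h
    refine ⟨i, ?_⟩
    have : (S : ℝ) ≤ lateLoads N T c xs t i := by exact_mod_cast h
    rw [sub_div]
    linarith
  rcases lt_or_ge t (flexStart T c) with hlt | hge
  · refine le_trans (expec_mono hq0 hq1 fun xs => ?_)
      ((tail_unflexed hN hT hq0 hq1 c ht.le hlt.le).trans (le_add_of_nonneg_right (by positivity)))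
    by_cases h : S ≤ maxLoad (lateLoads N T c xs t)
    · obtain ⟨i, hi⟩ := hmax xs h
      have h1 : (t : ℝ) + 1 < T - c * L := flexStart_lt hlt
      have h2 : 2 * L ≤ ((T : ℝ) - t) / N := by
        rw [le_div_iff₀ hNp]
        nlinarith
      rw [if_pos h, if_pos ⟨i, h2.trans hi⟩]
    · rw [if_neg h]
      split_ifs <;> norm_num
  · set α := flexExponent N q with hα
    have hα0 : 0 < α := flexExponent_pos hN hq0
    have hαN : α ≤ 1 / (2 * (N : ℝ)) := flexExponent_le hN hq1
    have hα1 : α ≤ 1 := hαN.trans (by rw [div_le_one (by positivity)]; linarith)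
    have hα2 : α ^ 2 ≤ 1 := pow_le_one₀ hα0.le hα1
    obtain ⟨k, rfl⟩ := Nat.exists_eq_add_of_le hge
    set T₀ := flexStart T c with hT₀
    -- `w` cuts off the unlikely starting configurations of the flexing phase.
    let w : (Fin N → ℕ) → ℝ := fun x => if ∃ i, 2 * L ≤ (x i : ℝ) - (T₀ : ℝ) / N then 0 else 1
    have w0 : ∀ x, 0 ≤ w x := fun x => by simp only [w]; split_ifs <;> norm_num
    have w1 : ∀ x, w x ≤ 1 := fun x => by simp only [w]; split_ifs <;> norm_num
    set m : ℝ := (T : ℝ) - (T₀ + k : ℕ) with hm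
    have hm0 : 0 ≤ m := by rw [hm]; linarith
    have hpt : ∀ xs : Fin T → Arrival N,
        (if S ≤ maxLoad (lateLoads N T c xs (T₀ + k)) then (1 : ℝ) else 0)
        ≤ (if ∃ i, 2 * L ≤ (lateLoads N T c xs T₀ i : ℝ) - (T₀ : ℝ) / N then (1 : ℝ) else 0)
          + Real.exp (-(α * (m / N))) * (w (lateLoads N T c xs T₀) *
            expPot α (lateLoads N T c xs (T₀ + k)) (T₀ + k)) := by
      intro xs
      have hp := expPot_nonneg α (lateLoads N T c xs (T₀ + k)) (T₀ + k)
      by_cases hG : ∃ i, 2 * L ≤ (lateLoads N T c xs T₀ i : ℝ) - (T₀ : ℝ) / N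
      · have : w (lateLoads N T c xs T₀) = 0 := by simp only [w]; rw [if_pos hG]
        rw [if_pos hG, this]
        split_ifs <;> norm_num
      · have : w (lateLoads N T c xs T₀) = 1 := by simp only [w]; rw [if_neg hG]
        rw [if_neg hG, this, zero_add, one_mul]
        split_ifs with h
        · obtain ⟨i, hi⟩ := hmax xs h
          have := mul_le_mul_of_nonneg_left
            (exp_le_expPot hα0.le (lateLoads N T c xs (T₀ + k)) (T₀ + k) i hi)
            (Real.exp_pos (-(α * (m / N)))).le
          rwa [← Real.exp_add, neg_add_cancel, Real.exp_zero] at this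
        · exact mul_nonneg (Real.exp_pos _).le hp
    refine (expec_mono hq0 hq1 hpt).trans ?_
    rw [expec_add, expec_mul_left]
    refine add_le_add (tail_unflexed hN hT hq0 hq1 c (by omega) le_rfl) ?_
    have hflex := expec_expPot_flexed (T := T) hN hq0 hq1 c hα hα0.le hα1 w w0 w1 k (by omega)
    set B := expec N T q (fun xs => w (lateLoads N T c xs T₀) *
      expPot α (lateLoads N T c xs T₀) T₀) with hB
    have hpow : (1 - α ^ 2) ^ k ≤ Real.exp (-(α ^ 2 * k)) := by
      have h1 : 1 - α ^ 2 ≤ Real.exp (-α ^ 2) := by linarith [Real.add_one_le_exp (-α ^ 2)]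
      refine (pow_le_pow_left₀ (by linarith) h1 k).trans (le_of_eq ?_)
      rw [← Real.exp_nat_mul]; ring_nf
    have hpow0 : 0 ≤ (1 - α ^ 2) ^ k := pow_nonneg (by linarith) k
    have hstart : (1 - α ^ 2) ^ k * B ≤ N * Real.exp (α ^ 2 * m) := by
      rcases Nat.eq_zero_or_pos T₀ with hz | hpos
      · have hBN : B ≤ N := by
          rw [hB, ← expec_const (T := T) hN q (N : ℝ)]
          refine expec_mono hq0 hq1 fun xs => ?_
          rw [hz, expPot_zero]
          nlinarith [w1 (lateLoads N T c xs 0)]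
        have h1 : (1 - α ^ 2) ^ k ≤ 1 := pow_le_one₀ (by linarith) (by nlinarith)
        have h2 : 1 ≤ Real.exp (α ^ 2 * m) := Real.one_le_exp (by positivity)
        calc (1 - α ^ 2) ^ k * B ≤ (1 - α ^ 2) ^ k * N := mul_le_mul_of_nonneg_left hBN hpow0
          _ ≤ 1 * N := mul_le_mul_of_nonneg_right h1 hNp.le
          _ ≤ N * Real.exp (α ^ 2 * m) := by nlinarith
      · have hBN : B ≤ N * Real.exp (α * (2 * L)) := by
          rw [hB, ← expec_const (T := T) hN q ((N : ℝ) * Real.exp (α * (2 * L)))]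
          refine expec_mono hq0 hq1 fun xs => ?_
          by_cases hG : ∃ i, 2 * L ≤ (lateLoads N T c xs T₀ i : ℝ) - (T₀ : ℝ) / N
          · have : w (lateLoads N T c xs T₀) = 0 := by simp only [w]; rw [if_pos hG]
            rw [this, zero_mul]
            positivity
          · have : w (lateLoads N T c xs T₀) = 1 := by simp only [w]; rw [if_neg hG]
            rw [this, one_mul]
            push Not at hG
            have h2 := Finset.sum_le_card_nsmul Finset.univ
              (fun i => Real.exp (α * ((lateLoads N T c xs T₀ i : ℝ) - (T₀ : ℝ) / N)))
              (Real.exp (α * (2 * L))) fun i _ =>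
              Real.exp_le_exp.mpr (mul_le_mul_of_nonneg_left (hG i).le hα0.le)
            rwa [Finset.card_univ, Fintype.card_fin, nsmul_eq_mul] at h2
        have hT0 : (T₀ : ℝ) ≤ T - c * L := by
          have h1 : ((T₀ - 1 : ℕ) : ℝ) + 1 < T - c * L :=
            flexStart_lt (T := T) (c := c) (t := T₀ - 1) (by omega)
          have h2 : ((T₀ - 1 : ℕ) : ℝ) + 1 = T₀ := by
            rw [Nat.cast_sub hpos]; push_cast; ring
          linarith
        have hexp : -(α ^ 2 * k) + α * (2 * L) ≤ α ^ 2 * m := by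
          have h1 : c * L ≤ k + m := by rw [hm]; push_cast; linarith
          have h2 : 2 ≤ α * c := two_le_flexExponent_mul_cs hN hq0
          have h3 : α * (2 * L) ≤ α ^ 2 * (c * L) := by
            have := mul_le_mul_of_nonneg_left h2 (mul_nonneg hα0.le hL0)
            nlinarith
          have h4 := mul_le_mul_of_nonneg_left h1 (sq_nonneg α)
          nlinarith
        calc (1 - α ^ 2) ^ k * B
            ≤ Real.exp (-(α ^ 2 * k)) * (N * Real.exp (α * (2 * L))) := by
              refine (mul_le_mul_of_nonneg_left hBN hpow0).trans ?_
              exact mul_le_mul_of_nonneg_right hpow (by positivity)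
          _ = N * Real.exp (-(α ^ 2 * k) + α * (2 * L)) := by rw [Real.exp_add]; ring
          _ ≤ N * Real.exp (α ^ 2 * m) :=
              mul_le_mul_of_nonneg_left (Real.exp_le_exp.mpr hexp) hNp.le
    have hone : 1 ≤ Real.exp (α ^ 2 * m) := Real.one_le_exp (by positivity)
    have htot : expec N T q (fun xs => w (lateLoads N T c xs T₀) *
        expPot α (lateLoads N T c xs (T₀ + k)) (T₀ + k)) ≤ 3 * N * Real.exp (α ^ 2 * m) := by
      nlinarith
    refine (mul_le_mul_of_nonneg_left htot (Real.exp_pos _).le).trans ?_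
    have hratio : tailRatio N q ^ (T - (T₀ + k)) = Real.exp (-(α / (2 * N)) * m) := by
      rw [tailRatio, ← Real.exp_nat_mul, Nat.cast_sub ht.le, ← hm, mul_comm]
    rw [hratio, mul_left_comm, ← Real.exp_add]
    refine mul_le_mul_of_nonneg_left (Real.exp_le_exp.mpr ?_) (by positivity)
    -- The contraction rate satisfies `α² ≤ α / (2N)`.
    have h1 : α ^ 2 ≤ α / (2 * N) := by
      have := mul_le_mul_of_nonneg_left hαN hα0.le
      calc α ^ 2 = α * α := sq α
        _ ≤ α * (1 / (2 * N)) := this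
        _ = α / (2 * N) := by ring
    have h2 := mul_le_mul_of_nonneg_right h1 hm0
    have h3 : α * (m / N) = 2 * (α / (2 * N) * m) := by field_simp
    linarith

lemma sum_tailRatio_le {N : ℕ} (hN : 2 ≤ N) {q : ℝ} (hq0 : 0 < q) (T : ℕ) :
    ∑ t ∈ Finset.range T, tailRatio N q ^ (T - t) ≤ (1 - tailRatio N q)⁻¹ := by
  have hr0 : 0 ≤ tailRatio N q := (Real.exp_pos _).le
  have hr1 : tailRatio N q < 1 := by
    have := flexExponent_pos hN hq0
    refine Real.exp_lt_one_iff.mpr ?_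
    have : 0 < flexExponent N q / (2 * N) := by positivity
    linarith
  rw [← Finset.sum_range_reflect]
  refine (Finset.sum_le_sum (g := fun j => tailRatio N q ^ j) fun j hj => ?_).trans ?_
  · have := Finset.mem_range.mp hj
    exact pow_le_pow_of_le_one hr0 hr1.le (by omega)
  · rw [← tsum_geometric_of_lt_one hr0 hr1]
    exact (summable_geometric_of_lt_one hr0 hr1).sum_le_tsum _ fun _ _ => pow_nonneg hr0 _

/-- **Theorem 5** (expected cycle length of the static opaque selling policy):
`NS - E[R^s] ∈ [N-1, θ]` for a constant `θ` depending only on `N` and `q`. -/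
theorem static_opaque_cycle_length (N : ℕ) [NeZero N] (hN : 2 ≤ N) (q : ℝ)
    (hq0 : 0 < q) (hq1 : q ≤ 1) :
    ∃ θ : ℝ, ∀ S : ℕ, 2 ≤ S →
      ((N : ℝ) - 1 ≤ (N : ℝ) * (S : ℝ) - staticOpaqueER N q S) ∧
      ((N : ℝ) * (S : ℝ) - staticOpaqueER N q S ≤ θ) := by

  refine ⟨(N : ℝ) - 1 + (N + 3 * N * (1 - tailRatio N q)⁻¹), fun S hS => ?_⟩
  have hN' : (2 : ℝ) ≤ N := by exact_mod_cast hN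
  set T := N * (S - 1) + 1 with hTdef
  set c := csOpaque N q with hc
  have hTS : (T : ℝ) = N * S - N + 1 := by
    rw [hTdef]; push_cast [Nat.cast_sub (show 1 ≤ S by omega)]; ring
  have hT2 : 2 ≤ T := by
    have : 1 ≤ N * (S - 1) := Nat.mul_pos (by omega) (by omega)
    omega
  have hTr : (2 : ℝ) ≤ T := by exact_mod_cast hT2
  have hER : staticOpaqueER N q S
      = expec N T q (fun xs => (hitTime T S (lateLoads N T c xs) : ℝ)) := rfl
  rw [hER]
  constructor
  · have : expec N T q (fun xs => (hitTime T S (lateLoads N T c xs) : ℝ)) ≤ T := by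
      rw [← expec_const (T := T) hN q (T : ℝ)]
      exact expec_mono hq0 hq1 fun xs => by exact_mod_cast hitTime_le _ _ _
    linarith
  · have hSge : (T : ℝ) / N ≤ S := by
      rw [div_le_iff₀ (by linarith), hTS]; nlinarith
    have hpt : ∀ xs : Fin T → Arrival N, (T : ℝ) ≤ (hitTime T S (lateLoads N T c xs) : ℝ)
        + ∑ t ∈ Finset.range T, if S ≤ maxLoad (lateLoads N T c xs t) then (1 : ℝ) else 0 := by
      intro xs
      have := sub_hitTime_le T S (lateLoads N T c xs) (maxLoad_lateLoads_mono c xs)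
      linarith
    have h1 := expec_mono hq0 hq1 hpt
    rw [expec_const hN, expec_add, expec_sum] at h1
    have h2 := Finset.sum_le_sum fun t (ht : t ∈ Finset.range T) =>
      tail_maxLoad hN hT2 hq0 hq1 hSge (Finset.mem_range.mp ht)
    rw [Finset.sum_add_distrib, ← Finset.mul_sum, Finset.sum_const, Finset.card_range,
      nsmul_eq_mul] at h2
    have h3 : (T : ℝ) * (N / T) = N := by field_simp
    have h4 := mul_le_mul_of_nonneg_left (sum_tailRatio_le hN hq0 T)
      (show (0 : ℝ) ≤ 3 * N by positivity)
    linarith
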